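/- Let F be an algebraically closed field, n ≥ 1, and let f ∈ F⟨X_1,…,X_m⟩ be a polynomial that is not a polynomial identity of M_n(F). Let Y_1,…,Y_m be generic n×n matrices over F. Then det f(Y_1,…,Y_m) is a nonzero element of the polynomial ring R; equivalently, f(Y_1,…,Y_m) is an invertible matrix over the fraction field K = Frac(R). -/

import Mathlib

/-!
Index the rows and columns by a finite cyclic group `ι` and substitute `x_{ij} t^{d(j - i)}` for
`x_{ij}`, where `d(g) ∈ ℕ` represents `g ∈ ι`. In the evaluation of `f` at the resulting matrices,
the coefficient of `t ^ k` is supported on the diagonal `j - i = k` of `ι × ι`, and moving along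
this diagonal amounts to shifting the indices of the variables, so an entry of the coefficient on
it vanishes only if all do. The leading coefficient in `t` is therefore a permutation matrix with
nonzero weights, and its determinant is a coefficient of the determinant of the evaluation.
Setting `t = 1` recovers the evaluation at the generic matrices.
-/

open Polynomial Matrix

section Det

variable {ι R : Type*} [Fintype ι] [DecidableEq ι] [CommRing R]

theorem sign_mul_det_of_apply_ne_zero (σ : Equiv.Perm ι) {M : Matrix ι ι R}
    (hM : ∀ i j, M i j ≠ 0 → j = σ i) : (Equiv.Perm.sign σ : R) * M.det = ∏ i, M i (σ i) := by
  have hdiag : M.submatrix id σ = diagonal fun i => M i (σ i) := by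
    ext i j
    by_cases hij : i = j
    · simp [hij]
    · rw [diagonal_apply_ne _ hij]
      by_contra h
      exact hij (σ.injective (hM i (σ j) h)).symm
  rw [← det_permute', hdiag, det_diagonal]

theorem coeff_det_card_mul_natDegree_matPolyEquiv (M : Matrix ι ι R[X]) :
    M.det.coeff (Fintype.card ι * (matPolyEquiv M).natDegree) =
      (matPolyEquiv M).leadingCoeff.det := by
  have hdeg (i j : ι) : (M i j).natDegree ≤ (matPolyEquiv M).natDegree := by
    refine natDegree_le_iff_coeff_eq_zero.mpr fun k hk => ?_
    rw [← matPolyEquiv_coeff_apply, coeff_eq_zero_of_natDegree_lt hk, Matrix.zero_apply]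
  rw [det_apply', det_apply', finsetSum_coeff]
  refine Finset.sum_congr rfl fun σ _ => ?_
  rw [← C_eq_intCast, coeff_C_mul, ← Finset.card_univ,
    coeff_prod_of_natDegree_le _ _ _ fun i _ => hdeg (σ i) i]
  simp only [leadingCoeff, matPolyEquiv_coeff_apply]

theorem isUnit_map_algebraMap_of_det_ne_zero {K : Type*} [Field K] [Algebra R K]
    [FaithfulSMul R K] {M : Matrix ι ι R} (hM : M.det ≠ 0) : IsUnit (M.map (algebraMap R K)) := by
  rw [isUnit_iff_isUnit_det, ← RingHom.mapMatrix_apply, ← RingHom.map_det, isUnit_iff_ne_zero]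
  exact (map_ne_zero_iff _ (FaithfulSMul.algebraMap_injective R K)).mpr hM

end Det

section Translation

variable {F ι A : Type*} [CommSemiring F] [Fintype ι] [DecidableEq ι] [AddCommGroup ι]
  [CommSemiring A] [Algebra F A]

/-- The matrices `M` whose entries are permuted by translations of the index group through
the endomorphisms `s g` of the coefficients: `s g (M i j) = M (i + g) (j + g)`. -/
def translationEquivariant (s : ι → A →ₐ[F] A) : Subalgebra F (Matrix ι ι A) :=
  ⨅ g, AlgHom.equalizer (s g).mapMatrix (reindexAlgEquiv F A (Equiv.addRight g).symm).toAlgHom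

theorem mem_translationEquivariant {s : ι → A →ₐ[F] A} {M : Matrix ι ι A} :
    M ∈ translationEquivariant s ↔ ∀ g i j, s g (M i j) = M (i + g) (j + g) := by
  simp only [translationEquivariant, Algebra.mem_iInf, AlgHom.mem_equalizer, ← Matrix.ext_iff]
  rfl

theorem coeff_matPolyEquiv_mem_translationEquivariant {s : ι → A →ₐ[F] A} {M : Matrix ι ι A[X]}
    (hM : M ∈ translationEquivariant fun g => mapAlgHom (s g)) (k : ℕ) :
    (matPolyEquiv M).coeff k ∈ translationEquivariant s := by
  rw [mem_translationEquivariant] at hM ⊢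
  intro g i j
  simp only [matPolyEquiv_coeff_apply, ← hM g i j, coe_mapAlgHom, coeff_map]
  rfl

theorem det_ne_zero_of_mem_translationEquivariant {R : Type*} [CommRing R] [IsDomain R]
    [Algebra F R] {s : ι → R →ₐ[F] R} {M : Matrix ι ι R} (hs : M ∈ translationEquivariant s) {h : ι}
    (hdiag : ∀ i j, M i j ≠ 0 → j - i = h) (hM : M ≠ 0) : M.det ≠ 0 := by
  rw [mem_translationEquivariant] at hs
  obtain ⟨i₀, j₀, hij₀⟩ : ∃ i j, M i j ≠ 0 := by
    simpa [← Matrix.ext_iff] using hM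
  have hne (i : ι) : M i (i + h) ≠ 0 := by
    intro hi
    have hshift := hs (i₀ - i) i (i + h)
    have hj : i + h + (i₀ - i) = j₀ := by
      rw [← hdiag i₀ j₀ hij₀]
      abel
    rw [hi, map_zero, add_sub_cancel, hj] at hshift
    exact hij₀ hshift.symm
  have hdet := sign_mul_det_of_apply_ne_zero (Equiv.addRight h) (M := M) fun i j hij => by
    simp [← hdiag i j hij]
  refine right_ne_zero_of_mul (hdet.trans_ne ?_)
  exact Finset.prod_ne_zero_iff.mpr fun i _ => hne i

end Translation

section DiagonalGraded

variable {ι : Type*} [Fintype ι] [DecidableEq ι] [AddCommGroup ι]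

/-- The polynomial matrices in which the coefficient of `X ^ k` is supported on the diagonal
`j - i = c k` of `ι × ι`. -/
def diagonalGraded {R : Type*} [CommSemiring R] (c : ℕ →+ ι) : Subalgebra R (Matrix ι ι R[X]) where
  carrier := {M | ∀ i j k, (M i j).coeff k ≠ 0 → j - i = c k}
  mul_mem' {M N} hM hN i j k h := by
    rw [mul_apply, finsetSum_coeff] at h
    obtain ⟨l, -, hl⟩ := Finset.exists_ne_zero_of_sum_ne_zero h
    rw [coeff_mul] at hl
    obtain ⟨p, hp, hprod⟩ := Finset.exists_ne_zero_of_sum_ne_zero hl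
    rw [← Finset.HasAntidiagonal.mem_antidiagonal.mp hp, map_add,
      ← hM i l p.1 (left_ne_zero_of_mul hprod), ← hN l j p.2 (right_ne_zero_of_mul hprod)]
    abel
  add_mem' {M N} hM hN i j k h := by
    by_cases hMk : (M i j).coeff k = 0
    · refine hN i j k ?_
      rwa [Matrix.add_apply, coeff_add, hMk, zero_add] at h
    · exact hM i j k hMk
  algebraMap_mem' r i j k h := by
    rw [algebraMap_matrix_apply] at h
    split_ifs at h with hij
    · rw [Polynomial.algebraMap_apply, coeff_C] at h
      split_ifs at h with hk
      · simp [hij, hk]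
      · exact absurd rfl h
    · simp at h

theorem det_ne_zero_of_mem_diagonalGraded {F R : Type*} [CommSemiring F] [CommRing R]
    [IsDomain R] [Algebra F R] {c : ℕ →+ ι} {s : ι → R →ₐ[F] R} {M : Matrix ι ι R[X]}
    (hc : M ∈ diagonalGraded c) (hs : M ∈ translationEquivariant fun g => mapAlgHom (s g))
    (hM : M ≠ 0) : M.det ≠ 0 := by
  have hlead : (matPolyEquiv M).leadingCoeff.det ≠ 0 := by
    refine det_ne_zero_of_mem_translationEquivariant
      (coeff_matPolyEquiv_mem_translationEquivariant hs _)
      (h := c (matPolyEquiv M).natDegree) (fun i j hij => hc i j _ ?_) ?_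
    · rwa [← matPolyEquiv_coeff_apply]
    · simpa using hM
  intro h
  rw [← coeff_det_card_mul_natDegree_matPolyEquiv, h, coeff_zero] at hlead
  exact hlead rfl

end DiagonalGraded

theorem exists_addCommGroup_surjective_natHom (ι : Type*) [Finite ι] [Nonempty ι] :
    ∃ (_ : AddCommGroup ι) (c : ℕ →+ ι), Function.Surjective c := by
  obtain ⟨e⟩ : Nonempty (ι ≃ ZMod (Nat.card ι)) :=
    Finite.card_eq.mp (Nat.card_zmod _).symm
  have : NeZero (Nat.card ι) := ⟨Nat.card_pos.ne'⟩
  let : AddCommGroup ι := e.addCommGroup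
  exact ⟨this, e.addEquiv.symm.toAddMonoidHom.comp (Nat.castAddMonoidHom _),
    e.symm.surjective.comp ZMod.natCast_zmod_surjective⟩

section WeightTwist

variable {F τ : Type*} [CommSemiring F]

/-- The substitution `x ↦ x t ^ w(x)`, which makes the weight `w` of a monomial visible as its
degree in the new variable `t`. -/
noncomputable def weightTwist (w : τ → ℕ) : MvPolynomial τ F →ₐ[F] (MvPolynomial τ F)[X] :=
  MvPolynomial.aeval fun x => C (MvPolynomial.X x) * X ^ w x

theorem weightTwist_X (w : τ → ℕ) (x : τ) :
    weightTwist (F := F) w (MvPolynomial.X x) = C (MvPolynomial.X x) * X ^ w x :=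
  MvPolynomial.aeval_X _ _

theorem weightTwist_injective (w : τ → ℕ) : Function.Injective (weightTwist (F := F) w) := by
  let setOne : (MvPolynomial τ F)[X] →ₐ[F] MvPolynomial τ F :=
    (aeval (1 : MvPolynomial τ F)).restrictScalars F
  have hcomp : setOne.comp (weightTwist w) = AlgHom.id F _ := by
    ext x
    simp [setOne, weightTwist_X]
  exact Function.LeftInverse.injective (g := setOne) (DFunLike.congr_fun hcomp)

end WeightTwist

theorem freeAlgebra_lift_mem {F L A : Type*} [CommSemiring F] [Semiring A] [Algebra F A]
    (S : Subalgebra F A) {a : L → A} (ha : ∀ ℓ, a ℓ ∈ S) (f : FreeAlgebra F L) :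
    FreeAlgebra.lift F a f ∈ S := by
  have hf : FreeAlgebra.lift F a f ∈ (FreeAlgebra.lift F a).range := ⟨f, rfl⟩
  rw [← Algebra.adjoin_range_eq_range_freeAlgebra_lift] at hf
  exact Algebra.adjoin_le (Set.range_subset_iff.mpr ha) hf

/-- The generic matrix `Y_ℓ`: its entries are the indeterminates `X (ℓ, i, j)`, where `ℓ` runs
over an index type `L`. -/
noncomputable def genericMatrix (F : Type*) {L ι : Type*} [CommSemiring F] (ℓ : L) :
    Matrix ι ι (MvPolynomial (L × ι × ι) F) :=
  of fun i j => MvPolynomial.X (ℓ, i, j)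

section Generic

variable {F L ι : Type*} [CommSemiring F] [Fintype ι] [DecidableEq ι]

theorem mapMatrix_aeval_lift_genericMatrix {A : Type*} [CommSemiring A] [Algebra F A]
    (a : L → Matrix ι ι A) (f : FreeAlgebra F L) :
    (MvPolynomial.aeval fun p : L × ι × ι => a p.1 p.2.1 p.2.2).mapMatrix
        (FreeAlgebra.lift F (genericMatrix F) f) = FreeAlgebra.lift F a f := by
  have hcomp : ((MvPolynomial.aeval fun p : L × ι × ι => a p.1 p.2.1 p.2.2).mapMatrix).comp
      (FreeAlgebra.lift F (genericMatrix F)) = FreeAlgebra.lift F a := by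
    ext ℓ i j
    simp [genericMatrix]
  exact DFunLike.congr_fun hcomp f

section Twisted

variable [AddCommGroup ι]

theorem mapMatrix_weightTwist_lift_genericMatrix_mem_diagonalGraded {c : ℕ →+ ι} {d : ι → ℕ}
    (hd : Function.RightInverse d c) (f : FreeAlgebra F L) :
    (weightTwist fun p : L × ι × ι => d (p.2.2 - p.2.1)).mapMatrix
      (FreeAlgebra.lift F (genericMatrix F) f) ∈ diagonalGraded c := by
  refine freeAlgebra_lift_mem (((diagonalGraded c).restrictScalars F).comap
    (weightTwist fun p : L × ι × ι => d (p.2.2 - p.2.1)).mapMatrix) (fun ℓ i j k hk => ?_) f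
  have hcoeff : (C (MvPolynomial.X (ℓ, i, j)) * X ^ d (j - i) :
      (MvPolynomial (L × ι × ι) F)[X]).coeff k ≠ 0 := by
    rwa [← weightTwist_X fun p : L × ι × ι => d (p.2.2 - p.2.1)]
  rw [coeff_C_mul_X_pow] at hcoeff
  rw [(ite_ne_right_iff.mp hcoeff).1, hd]

theorem mapMatrix_weightTwist_lift_genericMatrix_mem_translationEquivariant (d : ι → ℕ)
    (f : FreeAlgebra F L) :
    (weightTwist fun p : L × ι × ι => d (p.2.2 - p.2.1)).mapMatrix
      (FreeAlgebra.lift F (genericMatrix F) f) ∈ translationEquivariant fun g => mapAlgHom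
        (MvPolynomial.rename (R := F) fun p : L × ι × ι => (p.1, p.2.1 + g, p.2.2 + g)) := by
  refine freeAlgebra_lift_mem ((translationEquivariant _).comap
    (weightTwist fun p : L × ι × ι => d (p.2.2 - p.2.1)).mapMatrix) (fun ℓ => ?_) f
  rw [Subalgebra.mem_comap, mem_translationEquivariant]
  intro g i j
  simp [genericMatrix, weightTwist_X]

end Twisted

end Generic

section Domain

variable {F L ι : Type*} [CommRing F] [IsDomain F] [Fintype ι] [DecidableEq ι]

theorem det_lift_genericMatrix_ne_zero {f : FreeAlgebra F L}
    (hf : FreeAlgebra.lift F (genericMatrix F (ι := ι)) f ≠ 0) :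
    (FreeAlgebra.lift F (genericMatrix F (ι := ι)) f).det ≠ 0 := by
  cases isEmpty_or_nonempty ι
  · exact absurd (Subsingleton.elim _ _) hf
  obtain ⟨_, c, hc⟩ := exists_addCommGroup_surjective_natHom ι
  obtain ⟨d, hd⟩ := hc.hasRightInverse
  have htwist := weightTwist_injective (F := F) fun p : L × ι × ι => d (p.2.2 - p.2.1)
  refine (map_ne_zero_iff _ htwist).mp ?_
  rw [AlgHom.map_det]
  refine det_ne_zero_of_mem_diagonalGraded
    (mapMatrix_weightTwist_lift_genericMatrix_mem_diagonalGraded hd f)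
    (mapMatrix_weightTwist_lift_genericMatrix_mem_translationEquivariant d f) ?_
  exact (map_ne_zero_iff _ (Matrix.map_injective htwist)).mpr hf

theorem generic_eval_det_ne_zero_general {A : Type*} [CommSemiring A] [Algebra F A]
    (K : Type*) [Field K] [Algebra (MvPolynomial (L × ι × ι) F) K]
    [FaithfulSMul (MvPolynomial (L × ι × ι) F) K] (f : FreeAlgebra F L)
    (hf : ¬ ∀ a : L → Matrix ι ι A, FreeAlgebra.lift F a f = 0) :
    (FreeAlgebra.lift F (genericMatrix F (ι := ι)) f).det ≠ 0 ∧
      IsUnit ((FreeAlgebra.lift F (genericMatrix F (ι := ι)) f).map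
        (algebraMap (MvPolynomial (L × ι × ι) F) K)) := by
  obtain ⟨a, ha⟩ := not_forall.mp hf
  have hgeneric : FreeAlgebra.lift F (genericMatrix F (ι := ι)) f ≠ 0 := by
    intro h
    rw [← mapMatrix_aeval_lift_genericMatrix, h, map_zero] at ha
    exact ha rfl
  have hdet := det_lift_genericMatrix_ne_zero hgeneric
  exact ⟨hdet, isUnit_map_algebraMap_of_det_ne_zero hdet⟩

end Domain

/-- If `f` is not a polynomial identity of `Mₙ(F)` (`F` algebraically closed),
then the evaluation of `f` on the generic `n × n` matrices
`Y_ℓ = (x^{(ℓ)}_{i,j})` over `R = F[x^{(ℓ)}_{i,j}]` has nonzero determinant;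
equivalently, it is invertible as a matrix over `K = Frac R`. -/
theorem generic_eval_det_ne_zero (F : Type) [Field F] [IsAlgClosed F] (m n : ℕ)
    (hn : 1 ≤ n) (f : FreeAlgebra F (Fin m))
    (hf : ¬ ∀ a : Fin m → Matrix (Fin n) (Fin n) F, FreeAlgebra.lift F a f = 0) :
    ((FreeAlgebra.lift F (fun ℓ : Fin m =>
        (Matrix.of fun i j : Fin n => MvPolynomial.X (ℓ, i, j) :
          Matrix (Fin n) (Fin n) (MvPolynomial (Fin m × Fin n × Fin n) F))) f :
        Matrix (Fin n) (Fin n) (MvPolynomial (Fin m × Fin n × Fin n) F)).det ≠ 0) ∧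
    IsUnit ((FreeAlgebra.lift F (fun ℓ : Fin m =>
        (Matrix.of fun i j : Fin n => MvPolynomial.X (ℓ, i, j) :
          Matrix (Fin n) (Fin n) (MvPolynomial (Fin m × Fin n × Fin n) F))) f :
        Matrix (Fin n) (Fin n) (MvPolynomial (Fin m × Fin n × Fin n) F)).map
        (algebraMap (MvPolynomial (Fin m × Fin n × Fin n) F)
          (FractionRing (MvPolynomial (Fin m × Fin n × Fin n) F)))) :=
  generic_eval_det_ne_zero_general _ f hf
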